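/- arXiv:1311.1538 — 2 statements merged into one kernel-verified Lean document; each statement's English description precedes it below -/
import Mathlib

section
/- Let f₁, …, f_r, f ∈ ℝ⟨X⟩. The following four conditions are equivalent: (i) for every n ∈ ℕ and every A ∈ Mₙ(ℂ)^g, tr(f₁(A)) = … = tr(f_r(A)) = 0 implies tr(f(A)) = 0; (ii) there exist λ₁, …, λ_r ∈ ℂ such that λ₁f₁ + ⋯ + λ_rf_r is cyclically equivalent to 1 in ℂ⟨X⟩, or λ₁f₁ + ⋯ + λ_rf_r is cyclically equivalent to f in ℂ⟨X⟩; (iii) there exist λ₁, …, λ_r ∈ ℝ such that λ₁f₁ + ⋯ + λ_rf_r is cyclically equivalent to 1 in ℝ⟨X⟩, or λ₁f₁ + ⋯ + λ_rf_r is cyclically equivalent to f in ℝ⟨X⟩; (iv) for every n ∈ ℕ and every A ∈ Mₙ(ℝ)^g, tr(f₁(A)) = … = tr(f_r(A)) = 0 implies tr(f(A)) = 0. -/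
/-- Two free noncommutative polynomials are cyclically equivalent if their difference
lies in the `F`-linear span of commutators `p * q - q * p`. -/
def CycEq (F : Type*) [Field F] {g : ℕ} (f h : FreeAlgebra F (Fin g)) : Prop :=
  f - h ∈ Submodule.span F
    {x : FreeAlgebra F (Fin g) | ∃ p q : FreeAlgebra F (Fin g), x = p * q - q * p}

/-- The natural inclusion `ℝ⟨X⟩ → ℂ⟨X⟩`. -/
noncomputable def toComplex (g : ℕ) : FreeAlgebra ℝ (Fin g) →ₐ[ℝ] FreeAlgebra ℂ (Fin g) :=
  FreeAlgebra.lift ℝ (FreeAlgebra.ι ℂ)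

namespace SpurNS

lemma shift_prod {G P : Type} [Fintype P] [DecidableEq P] (s : P → P) (a : G → P → ℝ) :
    ∀ (n : ℕ) (v : Fin n → G) (p q : P),
    ((List.ofFn v).map (fun j => (Matrix.of fun p q => if q = s p then a j p else 0 :
      Matrix P P ℝ))).prod p q
      = if q = s^[n] p then ∏ i : Fin n, a (v i) (s^[(i : ℕ)] p) else 0 := by
  intro n
  induction n with
  | zero => intro v p q; simp [Matrix.one_apply, eq_comm]
  | succ n ih =>
    intro v p q
    rw [List.ofFn_succ, List.map_cons, List.prod_cons, Matrix.mul_apply]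
    simp only [Matrix.of_apply, ih, ite_mul, zero_mul, Finset.sum_ite_eq', Finset.mem_univ, if_true]
    rw [Fin.prod_univ_succ]
    simp
    congr

lemma nsmul_one_fin (D n : ℕ) : ((n • (1 : Fin (D+1)) : Fin (D+1)) : ℕ) = n % (D+1) := by
  induction n with
  | zero => simp
  | succ n ih =>
    rw [succ_nsmul, Fin.val_add, ih, Fin.val_one', Nat.add_mod_mod, Nat.mod_add_mod]

def sft (g D : ℕ) : (Fin (D+1) → Fin g) × Fin (D+1) → (Fin (D+1) → Fin g) × Fin (D+1) :=
  fun p => (p.1, p.2 + 1)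

lemma sft_iter (g D n : ℕ) (p) : (sft g D)^[n] p = (p.1, p.2 + n • 1) := by
  induction n with
  | zero => simp
  | succ n ih => rw [Function.iterate_succ_apply', ih]; simp [sft, succ_nsmul, add_assoc]

/-- weights -/
def wt {g D : ℕ} (c : (Fin (D+1) → Fin g) → ℝ) (j : Fin g)
    (p : (Fin (D+1) → Fin g) × Fin (D+1)) : ℝ :=
  if p.1 p.2 = j then (if p.2 = 0 then c p.1 else 1) else 0

/-- the block -/
def blk {g D : ℕ} (c : (Fin (D+1) → Fin g) → ℝ) (j : Fin g) :
    Matrix ((Fin (D+1) → Fin g) × Fin (D+1)) ((Fin (D+1) → Fin g) × Fin (D+1)) ℝ :=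
  Matrix.of fun p q => if q = sft g D p then wt c j p else 0

lemma blk_trace_lt {g D : ℕ} (c : (Fin (D+1) → Fin g) → ℝ) (u : List (Fin g)) (h1 : u ≠ [])
    (h2 : u.length ≤ D) : ((u.map (blk c)).prod).trace = 0 := by
  rw [Matrix.trace]
  refine Finset.sum_eq_zero fun p _ => ?_
  have := shift_prod (sft g D) (wt c) u.length u.get p p
  rw [List.ofFn_get] at this
  rw [Matrix.diag_apply]
  refine this.trans (if_neg ?_)
  rw [sft_iter]
  intro h
  have h3 := congrArg Prod.snd h
  simp only [left_eq_add] at h3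
  have h4 := congrArg Fin.val h3
  rw [nsmul_one_fin, Nat.mod_eq_of_lt (by omega)] at h4
  exact h1 (List.length_eq_zero_iff.1 h4)

lemma blk_trace_eq {g D : ℕ} (c : (Fin (D+1) → Fin g) → ℝ) (v : Fin (D+1) → Fin g) :
    (((List.ofFn v).map (blk c)).prod).trace = ∑ k : Fin (D+1), c (fun i => v (i + k)) := by
  rw [Matrix.trace, Fintype.sum_prod_type_right, ← Equiv.sum_comp (Equiv.neg (Fin (D+1)))]
  refine Finset.sum_congr rfl fun k _ => ?_
  rw [← Finset.sum_ite_eq_of_mem' Finset.univ (fun i => v (i + k)) c (Finset.mem_univ _)]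
  refine Finset.sum_congr rfl fun w _ => ?_
  rw [Matrix.diag_apply]
  have := shift_prod (sft g D) (wt c) (D+1) v (w, -k) (w, -k)
  refine this.trans ?_
  have h0 : (D+1) • (1 : Fin (D+1)) = 0 := by
    apply Fin.ext; rw [nsmul_one_fin]; simp
  have hi : ∀ i : Fin (D+1), (i : ℕ) • (1 : Fin (D+1)) = i := by
    intro i; apply Fin.ext; rw [nsmul_one_fin, Nat.mod_eq_of_lt i.2]
  rw [sft_iter, h0]
  simp only [add_zero, if_true, sft_iter, hi]
  rw [← Equiv.prod_comp (Equiv.addLeft k)]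
  simp only [Equiv.coe_addLeft, neg_add_cancel_left, wt]
  by_cases hw : w = fun i => v (i + k)
  · rw [if_pos hw]
    have : ∀ i, w i = v (k + i) := fun i => by rw [hw, add_comm k i]
    simp [this]
  · rw [if_neg hw]
    have : ∃ i, w i ≠ v (k + i) := by
      by_contra! h
      exact hw (funext fun i => by rw [h, add_comm k i])
    obtain ⟨i, hi⟩ := this
    exact Finset.prod_eq_zero (Finset.mem_univ i) (if_neg hi)

lemma cyc_rot {g D : ℕ} (L : List (Fin g) → ℝ) (hL : ∀ u v, L (u ++ v) = L (v ++ u))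
    (v : Fin (D+1) → Fin g) (k : Fin (D+1)) :
    L (List.ofFn fun i => v (i + k)) = L (List.ofFn v) := by
  have : (List.ofFn fun i => v (i + k)) = (List.ofFn v).rotate k := by
    apply List.ext_getElem
    · simp
    · intro i h1 h2
      simp only [List.getElem_rotate, List.getElem_ofFn, List.length_ofFn]
      congr 1
  rw [this, List.rotate_eq_drop_append_take (by simpa using k.2.le), hL, List.take_append_drop]

lemma fromBlocks_list {G m n : Type} [Fintype m] [Fintype n] [DecidableEq m] [DecidableEq n]
    (A : G → Matrix m m ℝ) (B : G → Matrix n n ℝ) (u : List G) :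
    (u.map fun j => Matrix.fromBlocks (A j) 0 0 (B j)).prod
      = Matrix.fromBlocks (u.map A).prod 0 0 (u.map B).prod := by
  induction u with
  | nil => simp
  | cons j u ih => simp [ih, Matrix.fromBlocks_multiply]

lemma realize (g D : ℕ) : ∃ (ι : Type) (_ : Fintype ι) (_ : DecidableEq ι) (_ : Nonempty ι),
    ∀ L : List (Fin g) → ℝ, (∀ u v, L (u ++ v) = L (v ++ u)) →
    ∃ A : Fin g → Matrix ι ι ℝ, ∀ u : List (Fin g), u ≠ [] → u.length ≤ D →
      ((u.map A).prod).trace = L u := by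
  induction D with
  | zero =>
    refine ⟨Unit, inferInstance, inferInstance, inferInstance, fun L _ => ⟨0, fun u h1 h2 => ?_⟩⟩
    exact absurd (List.length_eq_zero_iff.1 (Nat.le_zero.1 h2)) h1
  | succ D ih =>
    obtain ⟨ι, _, _, _, H⟩ := ih
    refine ⟨ι ⊕ ((Fin (D+1) → Fin g) × Fin (D+1)), inferInstance, inferInstance, inferInstance,
      fun L hL => ?_⟩
    obtain ⟨A, hA⟩ := H L hL
    let R : List (Fin g) → ℝ := fun u => L u - ((u.map A).prod).trace
    have hR : ∀ u v, R (u ++ v) = R (v ++ u) := by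
      intro u v
      simp only [R, hL u v, List.map_append, List.prod_append]
      rw [Matrix.trace_mul_comm]
    let c : (Fin (D+1) → Fin g) → ℝ := fun w => R (List.ofFn w) / (D+1)
    refine ⟨fun j => Matrix.fromBlocks (A j) 0 0 (blk c j), fun u h1 h2 => ?_⟩
    rw [fromBlocks_list]
    have ht : ∀ (X : Matrix ι ι ℝ) (Y : Matrix ((Fin (D+1) → Fin g) × Fin (D+1)) _ ℝ),
      (Matrix.fromBlocks X 0 0 Y).trace = X.trace + Y.trace := by
      intro X Y
      simp [Matrix.trace, Fintype.sum_sum_type]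
    rw [ht]
    rcases Nat.lt_or_ge D u.length with h3 | h3
    · have h4 : u.length = D + 1 := by omega
      obtain ⟨v, rfl⟩ : ∃ v : Fin (D+1) → Fin g, u = List.ofFn v := by
        refine ⟨fun i => u.get (i.cast h4.symm), ?_⟩
        apply List.ext_getElem
        · simp [h4]
        · intro i _ _; simp only [List.getElem_ofFn]; rfl
      rw [blk_trace_eq]
      simp only [c, cyc_rot R hR]
      simp only [Finset.sum_const, Finset.card_univ, Fintype.card_fin, nsmul_eq_mul, R]
      push_cast
      field_simp
      ring
    · rw [blk_trace_lt c u h1 h3, hA u h1 h3, add_zero]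

lemma realizeFin (g D : ℕ) : ∃ N : ℕ, N ≠ 0 ∧
    ∀ L : List (Fin g) → ℝ, (∀ u v, L (u ++ v) = L (v ++ u)) → L [] = N →
    ∃ A : Fin g → Matrix (Fin N) (Fin N) ℝ, ∀ u : List (Fin g), u.length ≤ D →
      ((u.map A).prod).trace = L u := by
  obtain ⟨ι, _, _, _, H⟩ := realize g D
  refine ⟨Fintype.card ι, Fintype.card_ne_zero, fun L hL h1 => ?_⟩
  obtain ⟨A, hA⟩ := H L hL
  let e := Matrix.reindexAlgEquiv ℝ ℝ (Fintype.equivFin ι)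
  refine ⟨fun j => e (A j), fun u hu => ?_⟩
  rcases eq_or_ne u [] with rfl | hne
  · simp [h1]
  · rw [← hA u hne hu]
    have : (u.map fun j => e (A j)).prod = e (u.map A).prod := by
      rw [map_list_prod, List.map_map]; rfl
    rw [this]
    simp only [Matrix.trace, e, Matrix.reindexAlgEquiv_apply, Matrix.reindex_apply, Matrix.diag_apply,
      Matrix.submatrix_apply]
    exact Equiv.sum_comp (Fintype.equivFin ι).symm (fun i => (u.map A).prod i i)

/-- monomials -/
noncomputable def mono {g : ℕ} (u : List (Fin g)) : FreeAlgebra ℝ (Fin g) :=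
  (u.map (FreeAlgebra.ι ℝ)).prod

lemma exists_deg {g : ℕ} (f : FreeAlgebra ℝ (Fin g)) :
    ∃ D : ℕ, ∀ D', D ≤ D' → f ∈ Submodule.span ℝ (mono '' {u : List (Fin g) | u.length ≤ D'}) := by
  have h : f ∈ Submodule.span ℝ (Set.range (mono (g := g))) := by
    have : f ∈ Subalgebra.toSubmodule (Algebra.adjoin ℝ (Set.range (FreeAlgebra.ι ℝ (X := Fin g)))) := by
      rw [FreeAlgebra.adjoin_range_ι]; trivial
    rw [Algebra.adjoin_eq_span] at this
    refine Submodule.span_mono ?_ this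
    intro x hx
    induction hx using Submonoid.closure_induction with
    | mem x hx => obtain ⟨j, rfl⟩ := hx; exact ⟨[j], by simp [mono]⟩
    | one => exact ⟨[], by simp [mono]⟩
    | mul x y _ _ hx hy =>
      obtain ⟨u, rfl⟩ := hx; obtain ⟨v, rfl⟩ := hy; exact ⟨u ++ v, by simp [mono]⟩
  obtain ⟨c, rfl⟩ := Finsupp.mem_span_range_iff_exists_finsupp.1 h
  refine ⟨c.support.sup List.length, fun D' hD => ?_⟩
  refine Submodule.sum_mem _ fun u hu => Submodule.smul_mem _ _ (Submodule.subset_span ⟨u, ?_, rfl⟩)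
  exact (Finset.le_sup (f := List.length) hu).trans hD

lemma comm_trace {F : Type*} [Field F] {g n : ℕ} (A : Fin g → Matrix (Fin n) (Fin n) F)
    (f h : FreeAlgebra F (Fin g)) (H : CycEq F f h) :
    (FreeAlgebra.lift F A f).trace = (FreeAlgebra.lift F A h).trace := by
  have : ∀ x ∈ Submodule.span F
    {x : FreeAlgebra F (Fin g) | ∃ p q : FreeAlgebra F (Fin g), x = p * q - q * p},
    (FreeAlgebra.lift F A x).trace = 0 := by
    intro x hx
    induction hx using Submodule.span_induction with
    | mem x hx =>
      obtain ⟨p, q, rfl⟩ := hx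
      rw [map_sub, map_mul, map_mul, Matrix.trace_sub, Matrix.trace_mul_comm, sub_self]
    | zero => simp
    | add x y _ _ hx hy => simp [hx, hy]
    | smul a x _ hx => simp [hx]
  have h2 := this _ H
  rwa [map_sub, Matrix.trace_sub, sub_eq_zero] at h2

lemma lift_toComplex {g n : ℕ} (A : Fin g → Matrix (Fin n) (Fin n) ℂ) (f : FreeAlgebra ℝ (Fin g)) :
    FreeAlgebra.lift ℂ A (toComplex g f) = FreeAlgebra.lift ℝ A f := by
  have : ((FreeAlgebra.lift ℂ A).restrictScalars ℝ).comp (toComplex g) = FreeAlgebra.lift ℝ A := by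
    apply FreeAlgebra.hom_ext
    funext j
    simp [toComplex]
  exact DFunLike.congr_fun this f

lemma lift_ofReal {g n : ℕ} (A : Fin g → Matrix (Fin n) (Fin n) ℝ) (f : FreeAlgebra ℝ (Fin g)) :
    (FreeAlgebra.lift ℝ (fun j => (A j).map (algebraMap ℝ ℂ)) f).trace
      = ((FreeAlgebra.lift ℝ A f).trace : ℂ) := by
  have : (FreeAlgebra.lift ℝ (fun j => (A j).map (algebraMap ℝ ℂ)))
      = ((Algebra.ofId ℝ ℂ).mapMatrix).comp (FreeAlgebra.lift ℝ A) := by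
    apply FreeAlgebra.hom_ext
    funext j
    ext a b
    simp [Algebra.ofId_apply]
  rw [this]
  simp [Matrix.trace, Algebra.ofId_apply]

lemma smul_cast {g : ℕ} (a : ℝ) (x : FreeAlgebra ℂ (Fin g)) : a • x = (a : ℂ) • x := by
  rw [Algebra.smul_def, Algebra.smul_def]; rfl

lemma toComplex_comm {g : ℕ} (f h : FreeAlgebra ℝ (Fin g)) (H : CycEq ℝ f h) :
    CycEq ℂ (toComplex g f) (toComplex g h) := by
  unfold CycEq at *
  rw [← map_sub]
  generalize f - h = y at H ⊢
  induction H using Submodule.span_induction with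
  | mem x hx =>
    obtain ⟨p, q, rfl⟩ := hx
    exact Submodule.subset_span ⟨toComplex g p, toComplex g q, by simp⟩
  | zero => simp
  | add x y _ _ hx hy => rw [map_add]; exact add_mem hx hy
  | smul a x _ hx =>
    rw [map_smul, smul_cast]
    exact Submodule.smul_mem _ _ hx

lemma main {g r : ℕ} (f : Fin r → FreeAlgebra ℝ (Fin g)) (f₀ : FreeAlgebra ℝ (Fin g))
    (H : ∀ (n : ℕ) (A : Fin g → Matrix (Fin n) (Fin n) ℝ),
          (∀ i : Fin r, Matrix.trace (FreeAlgebra.lift ℝ A (f i)) = 0) →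
          Matrix.trace (FreeAlgebra.lift ℝ A f₀) = 0) :
    ∃ lam : Fin r → ℝ,
          CycEq ℝ (∑ i : Fin r, lam i • f i) 1 ∨
          CycEq ℝ (∑ i : Fin r, lam i • f i) f₀ := by
  let C := Submodule.span ℝ
    {x : FreeAlgebra ℝ (Fin g) | ∃ p q : FreeAlgebra ℝ (Fin g), x = p * q - q * p}
  let U := Submodule.span ℝ (Set.range f) ⊔ C
  have key : ∀ h ∈ U, ∃ lam : Fin r → ℝ, CycEq ℝ (∑ i : Fin r, lam i • f i) h := by
    intro h hh
    obtain ⟨s, hs, t, ht, rfl⟩ := Submodule.mem_sup.1 hh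
    obtain ⟨lam, rfl⟩ := (Submodule.mem_span_range_iff_exists_fun ℝ).1 hs
    refine ⟨lam, ?_⟩
    unfold CycEq
    rw [sub_add_cancel_left]
    exact neg_mem ht
  by_cases h1 : (1 : FreeAlgebra ℝ (Fin g)) ∈ U
  · obtain ⟨lam, h⟩ := key _ h1; exact ⟨lam, Or.inl h⟩
  by_cases h0 : f₀ ∈ U
  · obtain ⟨lam, h⟩ := key _ h0; exact ⟨lam, Or.inr h⟩
  exfalso
  obtain ⟨L, hL1, hL0, hLU⟩ : ∃ L : FreeAlgebra ℝ (Fin g) →ₗ[ℝ] ℝ,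
      L 1 ≠ 0 ∧ L f₀ ≠ 0 ∧ ∀ x ∈ U, L x = 0 := by
    obtain ⟨L₁, a1, b1⟩ := Submodule.exists_le_ker_of_notMem h1
    obtain ⟨L₀, a0, b0⟩ := Submodule.exists_le_ker_of_notMem h0
    have b1' : ∀ x ∈ U, L₁ x = 0 := fun x hx => b1 hx
    have b0' : ∀ x ∈ U, L₀ x = 0 := fun x hx => b0 hx
    by_cases c1 : L₁ f₀ = 0
    · by_cases c0 : L₀ 1 = 0
      · refine ⟨L₁ + L₀, by simpa [c0] using a1, by simpa [c1] using a0, fun x hx => ?_⟩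
        simp [b1' x hx, b0' x hx]
      · exact ⟨L₀, c0, a0, b0'⟩
    · exact ⟨L₁, a1, c1, b1'⟩
  obtain ⟨D0, hD0⟩ := exists_deg f₀
  choose Df hDf using fun i => exists_deg (f i)
  let D := max D0 (Finset.univ.sup Df)
  obtain ⟨N, hN, HN⟩ := realizeFin g D
  have hN' : (N : ℝ) ≠ 0 := Nat.cast_ne_zero.2 hN
  let M : FreeAlgebra ℝ (Fin g) →ₗ[ℝ] ℝ := ((N : ℝ) / L 1) • L
  obtain ⟨A, hA⟩ := HN (fun u => M (mono u)) (by
    intro u v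
    have : mono (u ++ v) - mono (v ++ u) ∈ U :=
      (le_sup_right : C ≤ U) (Submodule.subset_span ⟨mono u, mono v, by simp [mono]⟩)
    have := hLU _ this
    rw [map_sub, sub_eq_zero] at this
    simp [M, this]) (by simp [M, mono, hL1])
  have hT : ∀ x ∈ Submodule.span ℝ (mono '' {u : List (Fin g) | u.length ≤ D}),
      (FreeAlgebra.lift ℝ A x).trace = M x := by
    intro x hx
    induction hx using Submodule.span_induction with
    | mem x hx =>
      obtain ⟨u, hu, rfl⟩ := hx
      rw [← hA u hu, mono, map_list_prod, List.map_map]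
      congr 3
      funext j
      simp
    | zero => simp
    | add x y _ _ hx hy => simp only [map_add, Matrix.trace_add, hx, hy]
    | smul a x _ hx => simp only [map_smul, Matrix.trace_smul, hx]
  have e0 := hT f₀ (hD0 D (le_max_left _ _))
  rw [H N A] at e0
  · simp [M, hL1, hL0, hN] at e0
  · intro i
    rw [hT (f i) (hDf i D ((Finset.le_sup (f := Df) (Finset.mem_univ i)).trans (le_max_right _ _)))]
    have : L (f i) = 0 :=
      hLU _ ((le_sup_left : _ ≤ U) (Submodule.subset_span ⟨i, rfl⟩))
    simp [M, this]

lemma easyC {g r : ℕ} (f : Fin r → FreeAlgebra ℝ (Fin g)) (f₀ : FreeAlgebra ℝ (Fin g))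
    (H : ∃ lam : Fin r → ℂ,
          CycEq ℂ (∑ i : Fin r, lam i • toComplex g (f i)) 1 ∨
          CycEq ℂ (∑ i : Fin r, lam i • toComplex g (f i)) (toComplex g f₀))
    (n : ℕ) (A : Fin g → Matrix (Fin n) (Fin n) ℂ)
    (hA : ∀ i : Fin r, Matrix.trace (FreeAlgebra.lift ℝ A (f i)) = 0) :
    Matrix.trace (FreeAlgebra.lift ℝ A f₀) = 0 := by
  obtain ⟨lam, h⟩ := H
  have hz : (FreeAlgebra.lift ℂ A (∑ i : Fin r, lam i • toComplex g (f i))).trace = 0 := by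
    rw [map_sum, Matrix.trace_sum]
    refine Finset.sum_eq_zero fun i _ => ?_
    rw [map_smul, Matrix.trace_smul, lift_toComplex, hA, smul_zero]
  rcases h with h | h
  · have := comm_trace A _ _ h
    rw [hz, map_one, Matrix.trace_one, Fintype.card_fin] at this
    have hn : n = 0 := by exact_mod_cast this.symm
    subst hn
    simp [Matrix.trace]
  · have := comm_trace A _ _ h
    rw [hz, lift_toComplex] at this
    exact this.symm

end SpurNS

/-- Passing between `ℝ` and its algebraic closure `ℂ`: four equivalent formulations
of the tracial Nullstellensatz for real free polynomials. -/
theorem real_complex_spurnullstellensatz (g r : ℕ)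
    (f : Fin r → FreeAlgebra ℝ (Fin g)) (f₀ : FreeAlgebra ℝ (Fin g)) :
    ((∀ (n : ℕ) (A : Fin g → Matrix (Fin n) (Fin n) ℂ),
        (∀ i : Fin r, Matrix.trace (FreeAlgebra.lift ℝ A (f i)) = 0) →
        Matrix.trace (FreeAlgebra.lift ℝ A f₀) = 0)
      ↔ (∃ lam : Fin r → ℂ,
          CycEq ℂ (∑ i : Fin r, lam i • toComplex g (f i)) 1 ∨
          CycEq ℂ (∑ i : Fin r, lam i • toComplex g (f i)) (toComplex g f₀)))
    ∧ ((∃ lam : Fin r → ℂ,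
          CycEq ℂ (∑ i : Fin r, lam i • toComplex g (f i)) 1 ∨
          CycEq ℂ (∑ i : Fin r, lam i • toComplex g (f i)) (toComplex g f₀))
      ↔ (∃ lam : Fin r → ℝ,
          CycEq ℝ (∑ i : Fin r, lam i • f i) 1 ∨
          CycEq ℝ (∑ i : Fin r, lam i • f i) f₀))
    ∧ ((∃ lam : Fin r → ℝ,
          CycEq ℝ (∑ i : Fin r, lam i • f i) 1 ∨
          CycEq ℝ (∑ i : Fin r, lam i • f i) f₀)
      ↔ (∀ (n : ℕ) (A : Fin g → Matrix (Fin n) (Fin n) ℝ),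
          (∀ i : Fin r, Matrix.trace (FreeAlgebra.lift ℝ A (f i)) = 0) →
          Matrix.trace (FreeAlgebra.lift ℝ A f₀) = 0)) := by
  have h43 := SpurNS.main f f₀
  have h32 : (∃ lam : Fin r → ℝ,
          CycEq ℝ (∑ i : Fin r, lam i • f i) 1 ∨
          CycEq ℝ (∑ i : Fin r, lam i • f i) f₀) → (∃ lam : Fin r → ℂ,
          CycEq ℂ (∑ i : Fin r, lam i • toComplex g (f i)) 1 ∨
          CycEq ℂ (∑ i : Fin r, lam i • toComplex g (f i)) (toComplex g f₀)) := by
    rintro ⟨lam, h⟩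
    have e : toComplex g (∑ i : Fin r, lam i • f i)
        = ∑ i : Fin r, ((lam i : ℝ) : ℂ) • toComplex g (f i) := by
      rw [map_sum]
      refine Finset.sum_congr rfl fun i _ => ?_
      rw [map_smul, SpurNS.smul_cast]
    refine ⟨fun i => ((lam i : ℝ) : ℂ), ?_⟩
    rw [← e]
    rcases h with h | h
    · left
      simpa using SpurNS.toComplex_comm _ _ h
    · right
      exact SpurNS.toComplex_comm _ _ h
  have h21 := SpurNS.easyC f f₀
  have h14 : (∀ (n : ℕ) (A : Fin g → Matrix (Fin n) (Fin n) ℂ),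
        (∀ i : Fin r, Matrix.trace (FreeAlgebra.lift ℝ A (f i)) = 0) →
        Matrix.trace (FreeAlgebra.lift ℝ A f₀) = 0) →
      (∀ (n : ℕ) (A : Fin g → Matrix (Fin n) (Fin n) ℝ),
          (∀ i : Fin r, Matrix.trace (FreeAlgebra.lift ℝ A (f i)) = 0) →
          Matrix.trace (FreeAlgebra.lift ℝ A f₀) = 0) := by
    intro h n A hA
    have := h n (fun j => (A j).map (algebraMap ℝ ℂ)) (fun i => by
      rw [SpurNS.lift_ofReal, hA i]; simp)
    rw [SpurNS.lift_ofReal] at this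
    exact_mod_cast this
  exact ⟨⟨fun h => h32 (h43 (h14 h)), h21⟩, ⟨fun h => h43 (h14 (h21 h)), h32⟩,
    ⟨fun h => h14 (h21 (h32 h)), h43⟩⟩
end

section
/- Let d ∈ ℕ and let L : ℂ⟨X⟩_d → ℂ be a tracial linear functional. Then there exist finitely many scalars λ₁, …, λ_k ∈ ℂ, sizes n₁, …, n_k ∈ ℕ, and tuples A_ℓ ∈ M_{n_ℓ}(ℂ)^g such that L(p) = Σ_{ℓ=1}^k λ_ℓ · tr(p(A_ℓ)) for every p ∈ ℂ⟨X⟩_d; that is, L lies in the linear span of the functionals φ_A. -/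
/-- The subspace `F⟨X⟩_d` of the free algebra spanned by words of length at most `d`. -/
def wordSpan (F : Type*) [Field F] (g d : ℕ) : Submodule F (FreeAlgebra F (Fin g)) :=
  Submodule.span F
    {x : FreeAlgebra F (Fin g) |
      ∃ w : List (Fin g), w.length ≤ d ∧ x = (w.map (FreeAlgebra.ι F)).prod}

lemma word_mem_wordSpan (F : Type*) [Field F] {g d : ℕ} (w : List (Fin g))
    (hw : w.length ≤ d) : (w.map (FreeAlgebra.ι F)).prod ∈ wordSpan F g d :=
  Submodule.subset_span ⟨w, hw, rfl⟩

/-- A linear functional on `F⟨X⟩_d` is tracial if `L (u * v) = L (v * u)` for all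
words `u, v` with `|u| + |v| ≤ d`. -/
def IsTracial {F : Type*} [Field F] {g d : ℕ} (L : wordSpan F g d →ₗ[F] F) : Prop :=
  ∀ (u v : List (Fin g)) (h : u.length + v.length ≤ d),
    L ⟨((u ++ v).map (FreeAlgebra.ι F)).prod,
        word_mem_wordSpan F (u ++ v) (by rw [List.length_append]; exact h)⟩ =
    L ⟨((v ++ u).map (FreeAlgebra.ι F)).prod,
        word_mem_wordSpan F (v ++ u) (by rw [List.length_append]; omega)⟩

namespace TrAux

open FreeAlgebra
open scoped Fin.NatCast Fin.CommRing

/-- word of letters W a, W (a+1), ... -/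
def wd {n g : ℕ} (W : Fin (n+1) → Fin g) : ℕ → Fin (n+1) → List (Fin g)
  | 0, _ => []
  | k+1, a => W a :: wd W k (a+1)

lemma wd_length {n g : ℕ} (W : Fin (n+1) → Fin g) (k : ℕ) (a : Fin (n+1)) :
    (wd W k a).length = k := by
  induction k generalizing a with
  | zero => rfl
  | succ k ih => simp [wd, ih]

lemma wd_add {n g : ℕ} (W : Fin (n+1) → Fin g) (j k : ℕ) (a : Fin (n+1)) :
    wd W (j+k) a = wd W j a ++ wd W k (a + (j : Fin (n+1))) := by
  induction j generalizing a with
  | zero => simp [wd]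
  | succ j ih =>
    rw [Nat.add_right_comm]
    simp only [wd, ih, List.cons_append]
    congr 3
    push_cast
    ring

lemma wd_ofFn {n g : ℕ} (W : Fin (n+1) → Fin g) (k : ℕ) (a : Fin (n+1)) :
    wd W k a = List.ofFn (fun i : Fin k => W (a + ((i : ℕ) : Fin (n+1)))) := by
  induction k generalizing a with
  | zero => simp [wd]
  | succ k ih =>
    rw [List.ofFn_succ, wd, ih]
    simp only [Fin.val_zero, Nat.cast_zero, add_zero, Fin.val_succ, Nat.cast_add, Nat.cast_one]
    congr 2
    funext i
    congr 1
    ring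

/-- cyclic matrices -/
def cyc {n g : ℕ} (W : Fin (n+1) → Fin g) (i : Fin g) : Matrix (Fin (n+1)) (Fin (n+1)) ℂ :=
  fun a b => if b = a + 1 ∧ i = W a then 1 else 0

lemma cyc_prod {n g : ℕ} (W : Fin (n+1) → Fin g) (v : List (Fin g)) (a b : Fin (n+1)) :
    (v.map (cyc W)).prod a b =
      if b = a + (v.length : Fin (n+1)) ∧ v = wd W v.length a then 1 else 0 := by
  induction v generalizing a with
  | nil => simp [wd, Matrix.one_apply, eq_comm]
  | cons i v ih =>
    rw [List.map_cons, List.prod_cons, Matrix.mul_apply]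
    simp only [ih, cyc, List.length_cons, wd, List.cons.injEq]
    rw [Finset.sum_eq_single (a+1)]
    · have : a + 1 + (v.length : Fin (n+1)) = a + ((v.length + 1 : ℕ) : Fin (n+1)) := by
        push_cast; ring
      rw [this]
      by_cases h : i = W a <;> simp [h]
    · intro c _ hc
      simp [hc]
    · simp

/-- the trace functional -/
noncomputable def phi {g n : ℕ} (A : Fin g → Matrix (Fin n) (Fin n) ℂ) :
    FreeAlgebra ℂ (Fin g) →ₗ[ℂ] ℂ :=
  (Matrix.traceLinearMap (Fin n) ℂ ℂ).comp (FreeAlgebra.lift ℂ A).toLinearMap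

/-- word as an element of the algebra -/
noncomputable def wo {g : ℕ} (w : List (Fin g)) : FreeAlgebra ℂ (Fin g) :=
  (w.map (FreeAlgebra.ι ℂ)).prod

lemma phi_wo {g n : ℕ} (A : Fin g → Matrix (Fin n) (Fin n) ℂ) (w : List (Fin g)) :
    phi A (wo w) = Matrix.trace (w.map A).prod := by
  simp [phi, wo, map_list_prod, Function.comp_def]

/-- span of trace functionals -/
def T (g : ℕ) : Submodule ℂ (FreeAlgebra ℂ (Fin g) →ₗ[ℂ] ℂ) :=
  Submodule.span ℂ {f | ∃ (n : ℕ) (A : Fin g → Matrix (Fin n) (Fin n) ℂ), f = phi A}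

lemma T_tracial {g : ℕ} {f : FreeAlgebra ℂ (Fin g) →ₗ[ℂ] ℂ} (hf : f ∈ T g)
    (u v : List (Fin g)) : f (wo (u ++ v)) = f (wo (v ++ u)) := by
  induction hf using Submodule.span_induction with
  | mem f h =>
    obtain ⟨n, A, rfl⟩ := h
    rw [phi_wo, phi_wo]
    simp only [List.map_append, List.prod_append]
    exact Matrix.trace_mul_comm _ _
  | zero => rfl
  | add f g _ _ h1 h2 => simp [h1, h2]
  | smul c f _ h => simp [h]

lemma phi_cyc {n g : ℕ} (W : Fin (n+1) → Fin g) (v : List (Fin g)) :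
    phi (cyc W) (wo v) =
      ∑ a : Fin (n+1), if (v.length : Fin (n+1)) = 0 ∧ v = wd W v.length a then 1 else 0 := by
  rw [phi_wo, Matrix.trace]
  refine Finset.sum_congr rfl fun a _ => ?_
  rw [Matrix.diag_apply, cyc_prod]
  simp

lemma wd_unique {n g : ℕ} (v : List (Fin g)) (hv : v.length = n+1) (a : Fin (n+1)) :
    ∃ W0 : Fin (n+1) → Fin g, ∀ W, v = wd W (n+1) a ↔ W = W0 := by
  obtain ⟨u, rfl⟩ : ∃ u : Fin (n+1) → Fin g, v = List.ofFn u := by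
    refine ⟨fun i => v.get (i.cast hv.symm), ?_⟩
    apply List.ext_get
    · simp [hv]
    · intro k h1 h2
      rw [List.get_ofFn]
      rfl
  refine ⟨fun x => u (x - a), fun W => ?_⟩
  rw [wd_ofFn, List.ofFn_inj]
  simp only [Fin.cast_val_eq_self]
  constructor
  · rintro rfl; funext x; simp
  · rintro rfl; funext x; simp

lemma step {g n d : ℕ} (hm : n + 1 ≤ d) (M : FreeAlgebra ℂ (Fin g) →ₗ[ℂ] ℂ)
    (hM : ∀ u v : List (Fin g), u.length + v.length ≤ d → M (wo (u ++ v)) = M (wo (v ++ u)))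
    (h0 : ∀ v : List (Fin g), 0 < v.length → v.length < n + 1 → M (wo v) = 0) :
    ∃ f ∈ T g, ∀ v : List (Fin g), 0 < v.length → v.length < n + 1 + 1 →
      M (wo v) = f (wo v) := by
    refine ⟨∑ W : Fin (n+1) → Fin g, (M (wo (wd W (n+1) 0)) * ((n:ℂ)+1)⁻¹) • phi (cyc W),
      Submodule.sum_mem _ fun W _ => Submodule.smul_mem _ _
        (Submodule.subset_span ⟨_, _, rfl⟩), fun v hv0 hv => ?_⟩
    have rot : ∀ (W : Fin (n+1) → Fin g) (a : Fin (n+1)),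
        M (wo (wd W (n+1) 0)) = M (wo (wd W (n+1) a)) := by
      intro W a
      have e1 : wd W (n+1) 0 = wd W a 0 ++ wd W (n+1-a) a := by
        have := wd_add W a (n+1-a) 0
        rw [Nat.add_sub_cancel' a.2.le] at this
        rw [this]; simp
      have e2 : wd W (n+1) a = wd W (n+1-a) a ++ wd W a 0 := by
        have := wd_add W (n+1-a) a a
        rw [Nat.sub_add_cancel a.2.le] at this
        rw [this]
        congr 2
        have h : ((a : ℕ) : Fin (n+1)) + ((n+1-a : ℕ) : Fin (n+1)) = 0 := by
          rw [← Nat.cast_add, Nat.add_sub_cancel' a.2.le]; simp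
        simpa using h
      rw [e1, e2]
      apply hM
      rw [wd_length, wd_length]
      have := a.2
      omega
    simp only [LinearMap.sum_apply, LinearMap.smul_apply, phi_cyc, smul_eq_mul]
    by_cases hl : v.length = n+1
    · have hz : ((n + 1 : ℕ) : Fin (n+1)) = 0 := by simp
      simp only [hl, hz, true_and, Finset.mul_sum]
      rw [Finset.sum_comm]
      have : ∀ a : Fin (n+1), ∑ W : Fin (n+1) → Fin g,
          M (wo (wd W (n+1) 0)) * ((n:ℂ)+1)⁻¹ * (if v = wd W (n+1) a then 1 else 0)
          = M (wo v) * ((n:ℂ)+1)⁻¹ := by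
        intro a
        obtain ⟨W0, hW⟩ := wd_unique v hl a
        rw [Finset.sum_eq_single W0]
        · have := (hW W0).2 rfl
          rw [if_pos this, rot W0 a, ← this, mul_one]
        · intro W _ hne
          rw [if_neg (fun h => hne ((hW W).1 h)), mul_zero]
        · simp
      rw [Finset.sum_congr rfl fun a _ => this a]
      have hn : (n:ℂ) + 1 ≠ 0 := Nat.cast_add_one_ne_zero n
      simp
      field_simp
    · rw [h0 v hv0 (by omega)]
      symm
      refine Finset.sum_eq_zero fun W _ => ?_
      have hz : (v.length : Fin (n+1)) ≠ 0 := by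
        intro h
        rw [Fin.natCast_eq_zero] at h
        have := Nat.le_of_dvd hv0 h
        omega
      simp [hz]

lemma main {g d : ℕ} (L : FreeAlgebra ℂ (Fin g) →ₗ[ℂ] ℂ)
    (hL : ∀ u v : List (Fin g), u.length + v.length ≤ d → L (wo (u ++ v)) = L (wo (v ++ u)))
    (n : ℕ) (hn : n ≤ d) :
    ∃ f ∈ T g, ∀ v : List (Fin g), 0 < v.length → v.length < n + 1 → L (wo v) = f (wo v) := by
  induction n with
  | zero => exact ⟨0, Submodule.zero_mem _, fun v h1 h2 => by omega⟩
  | succ n ih =>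
    obtain ⟨f, hf, h⟩ := ih (by omega)
    obtain ⟨f', hf', h'⟩ := step hn (L - f)
      (fun u v huv => by simp [hL u v huv, T_tracial hf u v])
      (fun v h1 h2 => by simp [h v h1 h2])
    refine ⟨f + f', Submodule.add_mem _ hf hf', fun v h1 h2 => ?_⟩
    have := h' v h1 h2
    rw [LinearMap.sub_apply] at this
    rw [LinearMap.add_apply, ← this]
    ring

lemma main' {g d : ℕ} (L : FreeAlgebra ℂ (Fin g) →ₗ[ℂ] ℂ)
    (hL : ∀ u v : List (Fin g), u.length + v.length ≤ d → L (wo (u ++ v)) = L (wo (v ++ u))) :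
    ∃ f ∈ T g, ∀ v : List (Fin g), v.length ≤ d → L (wo v) = f (wo v) := by
  obtain ⟨f, hf, h⟩ := main L hL d le_rfl
  refine ⟨f + (L (wo []) - f (wo [])) • phi (fun _ => (0 : Matrix (Fin 1) (Fin 1) ℂ)),
    Submodule.add_mem _ hf (Submodule.smul_mem _ _ (Submodule.subset_span ⟨_, _, rfl⟩)),
    fun v hv => ?_⟩
  rw [LinearMap.add_apply, LinearMap.smul_apply, phi_wo]
  cases v with
  | nil => simp
  | cons i v => simp [h (i :: v) (by simp) (by omega)]

end TrAux

/-- Every tracial linear functional on `ℂ⟨X⟩_d` is a linear combination of the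
functionals `p ↦ tr (p A)` for tuples of complex matrices `A`. -/
theorem tracial_functional_is_combination_of_traces (g d : ℕ)
    (L : wordSpan ℂ g d →ₗ[ℂ] ℂ) (hL : IsTracial L) :
    ∃ (k : ℕ) (lam : Fin k → ℂ) (sz : Fin k → ℕ)
      (A : (ℓ : Fin k) → Fin g → Matrix (Fin (sz ℓ)) (Fin (sz ℓ)) ℂ),
      ∀ p : wordSpan ℂ g d,
        L p = ∑ ℓ : Fin k,
          lam ℓ * Matrix.trace (FreeAlgebra.lift ℂ (A ℓ) (p : FreeAlgebra ℂ (Fin g))) := by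
  obtain ⟨L', hL'⟩ := LinearMap.exists_extend L
  have key : ∀ p : wordSpan ℂ g d, L' (p : FreeAlgebra ℂ (Fin g)) = L p := fun p => by
    rw [← hL']; rfl
  obtain ⟨f, hf, h⟩ := TrAux.main' (d := d) L' (fun u v huv => by
    have := hL u v huv
    rw [← key, ← key] at this
    exact this)
  obtain ⟨k, c, b, hb⟩ := Submodule.mem_span_set'.1 hf
  choose sz A hA using fun i => (b i).2
  refine ⟨k, c, sz, A, fun p => ?_⟩
  have e : L p = f (p : FreeAlgebra ℂ (Fin g)) := by
    rw [← key]
    have hle : wordSpan ℂ g d ≤ LinearMap.eqLocus L' f := by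
      refine Submodule.span_le.2 ?_
      rintro _ ⟨w, hw, rfl⟩
      exact h w hw
    exact hle p.2
  rw [e, ← hb, LinearMap.sum_apply]
  refine Finset.sum_congr rfl fun i _ => ?_
  rw [LinearMap.smul_apply, hA i, smul_eq_mul]
  rfl
end
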